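/- arXiv:1709.05322 — 2 statements merged into one kernel-verified Lean document; each statement's English description precedes it below -/
import Mathlib

section
/- Let (a_k)_{k≥1} be a sequence of scalars satisfying sup_n (1/n)∑_{k=1}^n |a_k| < ∞, and suppose c(1) := lim_n (1/n)∑_{k=1}^n a_k exists. Let T be a contraction on a (real or complex) Hilbert space H whose powers T^n converge in the weak operator topology to an operator P. Then for every x ∈ H, lim_n ‖(1/n)∑_{k=1}^n a_k T^k x − c(1)·P x‖ = 0. -/
open Filter Finset

/-!
A contraction `T` is asymptotically isometric along every orbit: since `‖T ^ n y‖` decreases to a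
limit, the defect `‖T ^ n y‖ ^ 2 - ‖T ^ (d + n) y‖ ^ 2` tends to zero uniformly in `d`, and the
Cauchy–Schwarz inequality for the positive semidefinite form `⟪u, v⟫ - ⟪S u, S v⟫` then bounds
`⟪u, T ^ n y⟫ - ⟪T ^ d u, T ^ (d + n) y⟫`. Consequently the weak limit `p` of an orbit is a fixed
vector, and if an orbit tends weakly to zero then its correlations `⟪T ^ (k + m) y, T ^ k y⟫` tend
to zero as `m → ∞` uniformly in `k`. In the expanded square of `∑ k ≤ n, a k • T ^ k y`, the pairs
`(j, k)` with `|j - k|` large then contribute `o(n ^ 2)` because `∑ k ≤ n, ‖a k‖ = O(n)`; so do the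
remaining pairs, because convergence of the averages of `a` forces `max_{k ≤ n} ‖a k‖ = o(n)`.
Taking `y = x - p` leaves only the averages of `a k • p`.
-/

open Asymptotics
open scoped Topology InnerProductSpace

section Defect

variable {𝕜 E F : Type*} [RCLike 𝕜] [SeminormedAddCommGroup E] [InnerProductSpace 𝕜 E]
  [SeminormedAddCommGroup F] [InnerProductSpace 𝕜 F]

/-- The defect form `⟪u, v⟫ - ⟪S u, S v⟫` of a contraction `S`, as a positive semidefinite inner
product; when `S` has an adjoint `S†`, it is `⟪u, (1 - S† S) v⟫`. It is encoded as a
`PreInnerProductSpace.Core` so that the Cauchy–Schwarz inequality applies to it. -/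
abbrev defectCore (S : E →L[𝕜] F) (hS : ‖S‖ ≤ 1) : PreInnerProductSpace.Core 𝕜 E where
  inner u v := ⟪u, v⟫_𝕜 - ⟪S u, S v⟫_𝕜
  conj_inner_symm u v := by simp only [map_sub, inner_conj_symm]
  re_inner_nonneg u := by
    have hu : ‖S u‖ ≤ ‖u‖ := (S.le_of_opNorm_le hS u).trans_eq (one_mul _)
    rw [map_sub, inner_self_eq_norm_sq, inner_self_eq_norm_sq, sub_nonneg]
    gcongr
  add_left u v w := by simp only [map_add, inner_add_left]; ring
  smul_left u v r := by simp only [map_smul, inner_smul_left]; ring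

lemma norm_inner_sub_inner_map_le (S : E →L[𝕜] F) (hS : ‖S‖ ≤ 1) (u v : E) :
    ‖⟪u, v⟫_𝕜 - ⟪S u, S v⟫_𝕜‖ ≤ ‖u‖ * √(‖v‖ ^ 2 - ‖S v‖ ^ 2) := by
  have cauchy_schwarz :=
    @InnerProductSpace.Core.norm_inner_le_norm 𝕜 E _ _ _ (defectCore S hS) u v
  have defect_norm (w : E) :
      RCLike.re (⟪w, w⟫_𝕜 - ⟪S w, S w⟫_𝕜) = ‖w‖ ^ 2 - ‖S w‖ ^ 2 := by
    rw [map_sub, inner_self_eq_norm_sq, inner_self_eq_norm_sq]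
  calc ‖⟪u, v⟫_𝕜 - ⟪S u, S v⟫_𝕜‖
      ≤ √(RCLike.re (⟪u, u⟫_𝕜 - ⟪S u, S u⟫_𝕜)) * √(RCLike.re (⟪v, v⟫_𝕜 - ⟪S v, S v⟫_𝕜)) :=
        cauchy_schwarz
    _ = √(‖u‖ ^ 2 - ‖S u‖ ^ 2) * √(‖v‖ ^ 2 - ‖S v‖ ^ 2) := by rw [defect_norm, defect_norm]
    _ ≤ ‖u‖ * √(‖v‖ ^ 2 - ‖S v‖ ^ 2) := by
        gcongr
        exact (Real.sqrt_le_left (norm_nonneg u)).2 (sub_le_self _ (sq_nonneg _))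

end Defect

section Powers

variable {𝕜 E : Type*} [NontriviallyNormedField 𝕜] [SeminormedAddCommGroup E] [NormedSpace 𝕜 E]
  {T : E →L[𝕜] E}

lemma opNorm_pow_le_one (hT : ‖T‖ ≤ 1) : ∀ n : ℕ, ‖T ^ n‖ ≤ 1
  | 0 => ContinuousLinearMap.norm_id_le
  | n + 1 => by
    rw [pow_succ]
    exact (norm_mul_le _ _).trans (mul_le_one₀ (opNorm_pow_le_one hT n) (norm_nonneg _) hT)

lemma norm_pow_apply_le (hT : ‖T‖ ≤ 1) (n : ℕ) (x : E) : ‖(T ^ n) x‖ ≤ ‖x‖ :=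
  ((T ^ n).le_of_opNorm_le (opNorm_pow_le_one hT n) x).trans_eq (one_mul _)

lemma pow_add_apply (m n : ℕ) (x : E) : (T ^ (m + n)) x = (T ^ m) ((T ^ n) x) := by
  rw [pow_add, mul_apply_eq_comp]

lemma antitone_norm_pow_apply (hT : ‖T‖ ≤ 1) (x : E) : Antitone fun n : ℕ => ‖(T ^ n) x‖ :=
  antitone_nat_of_succ_le fun n => by
    rw [add_comm, pow_add_apply]
    exact norm_pow_apply_le hT 1 _

lemma pow_apply_of_apply_eq {x : E} (hx : T x = x) (n : ℕ) : (T ^ n) x = x := by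
  simpa using Function.iterate_fixed hx n

end Powers

section Orbit

variable {𝕜 E : Type*} [RCLike 𝕜] [SeminormedAddCommGroup E] [InnerProductSpace 𝕜 E]
  {T : E →L[𝕜] E}

lemma eventually_norm_inner_sub_inner_pow_le (hT : ‖T‖ ≤ 1) (y : E) {ε : ℝ} (hε : 0 < ε) :
    ∀ᶠ n : ℕ in atTop, ∀ (d : ℕ) (u : E),
      ‖⟪u, (T ^ n) y⟫_𝕜 - ⟪(T ^ d) u, (T ^ (d + n)) y⟫_𝕜‖ ≤ ‖u‖ * ε := by
  have norm_anti := antitone_norm_pow_apply hT y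
  have norm_bdd : BddBelow (Set.range fun n : ℕ => ‖(T ^ n) y‖) :=
    ⟨0, Set.forall_mem_range.2 fun n => norm_nonneg _⟩
  obtain ⟨L, hL⟩ : ∃ L, Tendsto (fun n : ℕ => ‖(T ^ n) y‖) atTop (𝓝 L) :=
    ⟨_, tendsto_atTop_ciInf norm_anti norm_bdd⟩
  have L_nonneg : 0 ≤ L := ge_of_tendsto' hL fun n => norm_nonneg _
  have defect_tendsto : Tendsto (fun n : ℕ => √(‖(T ^ n) y‖ ^ 2 - L ^ 2)) atTop (𝓝 0) := by
    have sqrt_tendsto := ((hL.pow 2).sub_const (L ^ 2)).sqrt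
    rwa [sub_self, Real.sqrt_zero] at sqrt_tendsto
  filter_upwards [defect_tendsto.eventually_le_const hε] with n hn d u
  rw [pow_add_apply]
  refine (norm_inner_sub_inner_map_le (T ^ d) (opNorm_pow_le_one hT d) u _).trans ?_
  gcongr
  refine le_trans ?_ hn
  gcongr
  rw [← pow_add_apply]
  exact norm_anti.le_of_tendsto hL (d + n)

lemma tendstoUniformly_inner_pow_add (hT : ‖T‖ ≤ 1) {y : E}
    (hy : ∀ z : E, Tendsto (fun n : ℕ => ⟪(T ^ n) y, z⟫_𝕜) atTop (𝓝 0)) :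
    TendstoUniformly (fun m k : ℕ => ⟪(T ^ (k + m)) y, (T ^ k) y⟫_𝕜) 0 atTop := by
  simp only [Metric.tendstoUniformly_iff, Pi.zero_apply, dist_zero_left]
  intro ε hε
  obtain ⟨η, hη, hηε⟩ := exists_pos_mul_lt (half_pos hε) ‖y‖
  obtain ⟨N, hN⟩ := (eventually_norm_inner_sub_inner_pow_le (𝕜 := 𝕜) hT y hη).exists
  have small_of_fixed (k : ℕ) : ∀ᶠ m in atTop, ‖⟪(T ^ (k + m)) y, (T ^ k) y⟫_𝕜‖ < ε / 2 := by
    have shifted := (hy ((T ^ k) y)).comp (tendsto_add_atTop_nat k)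
    simp only [Function.comp_def, add_comm _ k] at shifted
    simpa using shifted.norm.eventually_lt_const (by simpa using half_pos hε)
  filter_upwards [(eventually_all_finset (range (N + 1))).2 fun k _ => small_of_fixed k]
    with m hm k
  rcases le_total k N with hkN | hNk
  · exact (hm k (mem_range_succ_iff.2 hkN)).trans (half_lt_self hε)
  · obtain ⟨d, rfl⟩ := Nat.exists_eq_add_of_le' hNk
    have close_to_N := hN d ((T ^ (N + m)) y)
    rw [← pow_add_apply, ← add_assoc] at close_to_N
    calc ‖⟪(T ^ (d + N + m)) y, (T ^ (d + N)) y⟫_𝕜‖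
        ≤ ‖⟪(T ^ (N + m)) y, (T ^ N) y⟫_𝕜‖
          + ‖⟪(T ^ (N + m)) y, (T ^ N) y⟫_𝕜 - ⟪(T ^ (d + N + m)) y, (T ^ (d + N)) y⟫_𝕜‖ :=
          norm_le_norm_add_norm_sub _ _
      _ ≤ ‖⟪(T ^ (N + m)) y, (T ^ N) y⟫_𝕜‖ + ‖(T ^ (N + m)) y‖ * η := by gcongr
      _ ≤ ‖⟪(T ^ (N + m)) y, (T ^ N) y⟫_𝕜‖ + ‖y‖ * η := by
          gcongr
          exact norm_pow_apply_le hT _ _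
      _ < ε := by linarith [hm N (self_mem_range_succ N)]

end Orbit

lemma map_eq_of_tendsto_inner_pow {𝕜 E : Type*} [RCLike 𝕜] [NormedAddCommGroup E]
    [InnerProductSpace 𝕜 E] {T : E →L[𝕜] E} (hT : ‖T‖ ≤ 1) {x p : E}
    (hp : ∀ z : E, Tendsto (fun n : ℕ => ⟪(T ^ n) x, z⟫_𝕜) atTop (𝓝 ⟪p, z⟫_𝕜)) : T p = p := by
  have hp' (z : E) : Tendsto (fun n : ℕ => ⟪z, (T ^ n) x⟫_𝕜) atTop (𝓝 ⟪z, p⟫_𝕜) := by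
    simpa only [Function.comp_def, inner_conj_symm] using
      (RCLike.continuous_conj.tendsto _).comp (hp z)
  have defect_tendsto :
      Tendsto (fun n : ℕ => ⟪p, (T ^ n) x⟫_𝕜 - ⟪T p, (T ^ (1 + n)) x⟫_𝕜) atTop (𝓝 0) := by
    rw [Metric.tendsto_nhds]
    intro ε hε
    obtain ⟨η, hη, hηε⟩ := exists_pos_mul_lt hε ‖p‖
    filter_upwards [eventually_norm_inner_sub_inner_pow_le (𝕜 := 𝕜) hT x hη] with n hn
    simpa only [dist_zero_right, pow_one] using (hn 1 p).trans_lt hηε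
  have defect_tendsto' :
      Tendsto (fun n : ℕ => ⟪p, (T ^ n) x⟫_𝕜 - ⟪T p, (T ^ (1 + n)) x⟫_𝕜) atTop
        (𝓝 (⟪p, p⟫_𝕜 - ⟪T p, p⟫_𝕜)) := by
    refine (hp' p).sub ?_
    simpa only [Function.comp_def, add_comm] using (hp' (T p)).comp (tendsto_add_atTop_nat 1)
  have inner_eq : ⟪T p, p⟫_𝕜 = ⟪p, p⟫_𝕜 :=
    (sub_eq_zero.1 (tendsto_nhds_unique defect_tendsto' defect_tendsto)).symm
  have norm_le : ‖T p‖ ≤ ‖p‖ := by simpa only [pow_one] using norm_pow_apply_le hT 1 p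
  exact eq_of_norm_le_re_inner_eq_norm_sq (𝕜 := 𝕜) norm_le
    (by rw [inner_eq, inner_self_eq_norm_sq])

section Growth

lemma isLittleO_natCast_iff_tendsto_inv_smul (𝕜 : Type*) {E : Type*} [RCLike 𝕜]
    [SeminormedAddCommGroup E] [NormedSpace 𝕜 E] {f : ℕ → E} :
    f =o[atTop] (fun n : ℕ => (n : ℝ)) ↔
      Tendsto (fun n : ℕ => (n : 𝕜)⁻¹ • f n) atTop (𝓝 0) := by
  rw [← isLittleO_norm_left, isLittleO_iff_tendsto',
    tendsto_zero_iff_norm_tendsto_zero (f := fun n : ℕ => (n : 𝕜)⁻¹ • f n)]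
  · simp only [norm_smul, norm_inv, RCLike.norm_natCast, div_eq_inv_mul]
  · filter_upwards [eventually_ne_atTop 0] with n hn hn0
    exact absurd (Nat.cast_eq_zero.1 hn0) hn

lemma isLittleO_natCast_of_sum_Icc_sub_nsmul {E : Type*} [SeminormedAddCommGroup E]
    {a : ℕ → E} {c : E}
    (h : (fun n : ℕ => ∑ k ∈ Icc 1 n, a k - n • c) =o[atTop] (fun n : ℕ => (n : ℝ))) :
    a =o[atTop] (fun n : ℕ => (n : ℝ)) := by
  have h_pred : (fun n : ℕ => ∑ k ∈ Icc 1 (n - 1), a k - (n - 1) • c)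
      =o[atTop] (fun n : ℕ => (n : ℝ)) :=
    (h.comp_tendsto (tendsto_sub_atTop_nat 1)).trans_le fun n => by simp
  have h_const : (fun _ : ℕ => c) =o[atTop] (fun n : ℕ => (n : ℝ)) :=
    (isBigO_const_const c (one_ne_zero' ℝ) atTop).trans_isLittleO <|
      (isLittleO_one_left_iff ℝ).2 (tendsto_norm_atTop_atTop.comp tendsto_natCast_atTop_atTop)
  refine ((h.sub h_pred).add h_const).congr' ?_ .rfl
  filter_upwards [eventually_ge_atTop 1] with n hn
  obtain ⟨m, rfl⟩ := Nat.exists_eq_add_of_le' hn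
  rw [Nat.add_sub_cancel, sum_Icc_succ_top (Nat.le_add_left 1 m), succ_nsmul]
  abel

lemma isLittleO_natCast_of_tendsto_average {𝕜 E : Type*} [RCLike 𝕜] [SeminormedAddCommGroup E]
    [NormedSpace 𝕜 E] {a : ℕ → E} {c : E}
    (h : Tendsto (fun n : ℕ => (n : 𝕜)⁻¹ • ∑ k ∈ Icc 1 n, a k) atTop (𝓝 c)) :
    a =o[atTop] (fun n : ℕ => (n : ℝ)) := by
  refine isLittleO_natCast_of_sum_Icc_sub_nsmul (c := c)
    ((isLittleO_natCast_iff_tendsto_inv_smul 𝕜).2 ?_)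
  refine (tendsto_sub_nhds_zero_iff.2 h).congr' ?_
  filter_upwards [eventually_ne_atTop 0] with n hn
  rw [smul_sub, ← Nat.cast_smul_eq_nsmul 𝕜 n c, inv_smul_smul₀ (Nat.cast_ne_zero.2 hn)]

lemma eventually_forall_le_norm_le_of_isLittleO {E : Type*} [SeminormedAddCommGroup E]
    {a : ℕ → E} {g : ℕ → ℝ} (hg : Monotone g) (hg_top : Tendsto g atTop atTop)
    (h : a =o[atTop] g) {δ : ℝ} (hδ : 0 < δ) :
    ∀ᶠ n in atTop, ∀ k ≤ n, ‖a k‖ ≤ δ * g n := by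
  obtain ⟨K, hK⟩ := eventually_atTop.1 ((h.bound hδ).and (hg_top.eventually_ge_atTop 0))
  have initial_small : ∀ᶠ n in atTop, ∀ k ∈ range K, ‖a k‖ ≤ δ * g n :=
    (eventually_all_finset _).2 fun k _ =>
      (hg_top.const_mul_atTop hδ).eventually_ge_atTop ‖a k‖
  filter_upwards [initial_small] with n hn k hkn
  rcases lt_or_ge k K with hkK | hKk
  · exact hn k (mem_range.2 hkK)
  · obtain ⟨hak, hgk⟩ := hK k hKk
    rw [Real.norm_of_nonneg hgk] at hak
    exact hak.trans (by gcongr; exact hg hkn)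

end Growth

section AlmostOrthogonal

lemma sum_mul_le_of_near_of_far {s : Finset ℕ} {w g : ℕ → ℝ} {D R ε : ℝ} (j M : ℕ)
    (hw : ∀ k ∈ s, 0 ≤ w k) (hwD : ∀ k ∈ s, w k ≤ D) (hD : 0 ≤ D) (hR : 0 ≤ R) (hε : 0 ≤ ε)
    (hnear : ∀ k, g k ≤ R) (hfar : ∀ k ∉ Icc (j - M) (j + M), g k ≤ ε) :
    ∑ k ∈ s, w k * g k ≤ ε * ∑ k ∈ s, w k + (2 * M + 1) * (D * R) := by
  have pointwise : ∀ k ∈ s,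
      w k * g k ≤ ε * w k + if k ∈ Icc (j - M) (j + M) then D * R else 0 := by
    intro k hk
    have hwk := hw k hk
    split_ifs with hkj
    · calc w k * g k ≤ D * R :=
            (mul_le_mul_of_nonneg_left (hnear k) hwk).trans
              (mul_le_mul_of_nonneg_right (hwD k hk) hR)
        _ ≤ ε * w k + D * R := le_add_of_nonneg_left (by positivity)
    · rw [add_zero, mul_comm]
      gcongr
      exact hfar k hkj
  have card_near : #{k ∈ s | k ∈ Icc (j - M) (j + M)} ≤ 2 * M + 1 :=
    calc #{k ∈ s | k ∈ Icc (j - M) (j + M)} ≤ #(Icc (j - M) (j + M)) :=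
          card_le_card fun k hk => (mem_filter.1 hk).2
      _ ≤ 2 * M + 1 := by rw [Nat.card_Icc]; lia
  calc ∑ k ∈ s, w k * g k
      ≤ ∑ k ∈ s, (ε * w k + if k ∈ Icc (j - M) (j + M) then D * R else 0) :=
        sum_le_sum pointwise
    _ = ε * ∑ k ∈ s, w k + #{k ∈ s | k ∈ Icc (j - M) (j + M)} * (D * R) := by
        rw [sum_add_distrib, mul_sum, ← sum_filter, sum_const, nsmul_eq_mul]
    _ ≤ ε * ∑ k ∈ s, w k + (2 * M + 1) * (D * R) := by
        gcongr
        exact_mod_cast card_near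

variable {𝕜 E : Type*} [RCLike 𝕜] [SeminormedAddCommGroup E] [InnerProductSpace 𝕜 E]

lemma norm_sum_smul_sq_le {ι : Type*} (s : Finset ι) (a : ι → 𝕜) (v : ι → E) :
    ‖∑ i ∈ s, a i • v i‖ ^ 2 ≤ ∑ i ∈ s, ‖a i‖ * ∑ j ∈ s, ‖a j‖ * ‖⟪v i, v j⟫_𝕜‖ := by
  calc ‖∑ i ∈ s, a i • v i‖ ^ 2
      = ‖⟪∑ i ∈ s, a i • v i, ∑ j ∈ s, a j • v j⟫_𝕜‖ := by
        rw [inner_self_eq_norm_sq_to_K, norm_pow, RCLike.norm_ofReal, abs_norm]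
    _ = ‖∑ i ∈ s, ∑ j ∈ s, ⟪a i • v i, a j • v j⟫_𝕜‖ := by simp_rw [sum_inner, inner_sum]
    _ ≤ ∑ i ∈ s, ∑ j ∈ s, ‖⟪a i • v i, a j • v j⟫_𝕜‖ :=
        (norm_sum_le _ _).trans (sum_le_sum fun i _ => norm_sum_le _ _)
    _ = ∑ i ∈ s, ‖a i‖ * ∑ j ∈ s, ‖a j‖ * ‖⟪v i, v j⟫_𝕜‖ := by
        simp only [inner_smul_left, inner_smul_right, norm_mul, RCLike.norm_conj, mul_sum,
          mul_left_comm]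

lemma norm_sum_smul_sq_le_of_almost_orthogonal {s : Finset ℕ} {a : ℕ → 𝕜} {v : ℕ → E}
    {D R ε : ℝ} {M : ℕ} (ha : ∀ k ∈ s, ‖a k‖ ≤ D) (hD : 0 ≤ D) (hε : 0 ≤ ε)
    (hv : ∀ k, ‖v k‖ ≤ R) (hfar : ∀ m ≥ M, ∀ k, ‖⟪v (k + m), v k⟫_𝕜‖ ≤ ε) :
    ‖∑ k ∈ s, a k • v k‖ ^ 2 ≤
      (∑ k ∈ s, ‖a k‖) * (ε * ∑ k ∈ s, ‖a k‖ + (2 * M + 1) * (D * R ^ 2)) := by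
  have hR : 0 ≤ R := (norm_nonneg _).trans (hv 0)
  have near (j k : ℕ) : ‖⟪v j, v k⟫_𝕜‖ ≤ R ^ 2 :=
    calc ‖⟪v j, v k⟫_𝕜‖ ≤ ‖v j‖ * ‖v k‖ := norm_inner_le_norm _ _
      _ ≤ R ^ 2 := by rw [sq]; gcongr <;> exact hv _
  have far (j k : ℕ) (hk : k ∉ Icc (j - M) (j + M)) : ‖⟪v j, v k⟫_𝕜‖ ≤ ε := by
    rw [mem_Icc] at hk
    rcases le_total j k with hjk | hkj
    · obtain ⟨m, rfl⟩ := Nat.exists_eq_add_of_le hjk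
      rw [norm_inner_symm]
      exact hfar m (by lia) j
    · obtain ⟨m, rfl⟩ := Nat.exists_eq_add_of_le hkj
      exact hfar m (by lia) k
  refine (norm_sum_smul_sq_le s a v).trans ?_
  rw [sum_mul]
  gcongr with j
  exact sum_mul_le_of_near_of_far j M (fun k _ => norm_nonneg _) ha hD (sq_nonneg R) hε
    (near j) (far j)

lemma isLittleO_sum_Icc_smul {a : ℕ → 𝕜} {v : ℕ → E} {R : ℝ}
    (ha_bdd : (fun n : ℕ => ∑ k ∈ Icc 1 n, ‖a k‖) =O[atTop] (fun n : ℕ => (n : ℝ)))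
    (ha : a =o[atTop] (fun n : ℕ => (n : ℝ))) (hv : ∀ k, ‖v k‖ ≤ R)
    (hcorr : TendstoUniformly (fun m k : ℕ => ⟪v (k + m), v k⟫_𝕜) 0 atTop) :
    (fun n : ℕ => ∑ k ∈ Icc 1 n, a k • v k) =o[atTop] (fun n : ℕ => (n : ℝ)) := by
  rw [isLittleO_iff]
  intro η hη
  obtain ⟨C, hC, hC_bound⟩ := ha_bdd.exists_pos
  have hη2 : 0 < η ^ 2 / 2 := by positivity
  obtain ⟨ε, hε, hε_lt⟩ := exists_pos_mul_lt hη2 (C ^ 2)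
  simp only [Metric.tendstoUniformly_iff, Pi.zero_apply, dist_zero_left] at hcorr
  obtain ⟨M, hM⟩ := eventually_atTop.1 (hcorr ε hε)
  obtain ⟨δ, hδ, hδ_lt⟩ := exists_pos_mul_lt hη2 (C * ((2 * M + 1) * R ^ 2))
  filter_upwards [hC_bound.bound, eventually_forall_le_norm_le_of_isLittleO Nat.mono_cast
    tendsto_natCast_atTop_atTop ha hδ] with n hA ha_le
  rw [Real.norm_natCast, Real.norm_of_nonneg (by positivity)] at hA
  rw [Real.norm_natCast]
  refine le_of_pow_le_pow_left₀ two_ne_zero (by positivity) ?_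
  calc ‖∑ k ∈ Icc 1 n, a k • v k‖ ^ 2
      ≤ (∑ k ∈ Icc 1 n, ‖a k‖) *
          (ε * ∑ k ∈ Icc 1 n, ‖a k‖ + (2 * M + 1) * (δ * n * R ^ 2)) :=
        norm_sum_smul_sq_le_of_almost_orthogonal (fun k hk => ha_le k (mem_Icc.1 hk).2)
          (by positivity) hε.le hv fun m hm k => (hM m hm k).le
    _ ≤ (C * n) * (ε * (C * n) + (2 * M + 1) * (δ * n * R ^ 2)) := by gcongr
    _ = (C ^ 2 * ε + C * ((2 * M + 1) * R ^ 2) * δ) * n ^ 2 := by ring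
    _ ≤ (η ^ 2 / 2 + η ^ 2 / 2) * n ^ 2 := by gcongr
    _ = (η * n) ^ 2 := by ring

end AlmostOrthogonal

theorem stmt6_general {𝕜 : Type*} [RCLike 𝕜] {H : Type*} [NormedAddCommGroup H]
    [InnerProductSpace 𝕜 H] {a : ℕ → 𝕜}
    (ha_bdd : ∃ C : ℝ, ∀ n : ℕ, (n : ℝ)⁻¹ * ∑ k ∈ Icc 1 n, ‖a k‖ ≤ C)
    {c : 𝕜} (hc : Tendsto (fun n : ℕ => (n : 𝕜)⁻¹ * ∑ k ∈ Icc 1 n, a k) atTop (𝓝 c))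
    {T : H →L[𝕜] H} (hT : ‖T‖ ≤ 1) {x p : H}
    (hp : ∀ z : H, Tendsto (fun n : ℕ => ⟪(T ^ n) x, z⟫_𝕜) atTop (𝓝 ⟪p, z⟫_𝕜)) :
    Tendsto (fun n : ℕ => (n : 𝕜)⁻¹ • ∑ k ∈ Icc 1 n, a k • (T ^ k) x) atTop (𝓝 (c • p)) := by
  have fixed (n : ℕ) : (T ^ n) p = p := pow_apply_of_apply_eq (map_eq_of_tendsto_inner_pow hT hp) n
  have sum_norm_isBigO : (fun n : ℕ => ∑ k ∈ Icc 1 n, ‖a k‖) =O[atTop] (fun n : ℕ => (n : ℝ)) := by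
    obtain ⟨C, hC⟩ := ha_bdd
    refine .of_bound C ((eventually_gt_atTop 0).mono fun n hn => ?_)
    rw [Real.norm_natCast, Real.norm_of_nonneg (by positivity), mul_comm]
    exact (inv_mul_le_iff₀ (by positivity)).1 (hC n)
  have weights_isLittleO : a =o[atTop] (fun n : ℕ => (n : ℝ)) :=
    isLittleO_natCast_of_tendsto_average (𝕜 := 𝕜) (by simpa only [smul_eq_mul] using hc)
  have weakly_null (z : H) : Tendsto (fun n : ℕ => ⟪(T ^ n) (x - p), z⟫_𝕜) atTop (𝓝 0) := by
    simpa only [map_sub, fixed, inner_sub_left] using tendsto_sub_nhds_zero_iff.2 (hp z)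
  have fluctuation := (isLittleO_natCast_iff_tendsto_inv_smul 𝕜).1 <|
    isLittleO_sum_Icc_smul sum_norm_isBigO weights_isLittleO
      (fun k => norm_pow_apply_le hT k (x - p)) (tendstoUniformly_inner_pow_add hT weakly_null)
  have sum_split := fluctuation.add (hc.smul_const p)
  rw [zero_add] at sum_split
  refine sum_split.congr fun n => ?_
  rw [mul_smul, ← smul_add, sum_smul, ← sum_add_distrib]
  simp only [map_sub, fixed, ← smul_add, sub_add_cancel]

/-- Let `(a_k)` be scalars with `sup_n (1/n) ∑_{k=1}^n |a_k| < ∞` such that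
`c(1) := lim_n (1/n) ∑_{k=1}^n a_k` exists. Let `T` be a contraction on a (real or complex)
Hilbert space `H` whose powers converge in the weak operator topology to `P`. Then for every
`x ∈ H`, `lim_n ‖(1/n) ∑_{k=1}^n a_k T^k x − c(1) P x‖ = 0`. -/
theorem stmt6 {𝕜 : Type*} [RCLike 𝕜] {H : Type*} [NormedAddCommGroup H]
    [InnerProductSpace 𝕜 H] [CompleteSpace H]
    (a : ℕ → 𝕜)
    (ha_bdd : ∃ C : ℝ, ∀ n : ℕ, (n : ℝ)⁻¹ * ∑ k ∈ Icc 1 n, ‖a k‖ ≤ C)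
    (c : 𝕜) (hc : Tendsto (fun n : ℕ => (n : 𝕜)⁻¹ * ∑ k ∈ Icc 1 n, a k) atTop (nhds c))
    (T : H →L[𝕜] H) (hT : ‖T‖ ≤ 1) (P : H →L[𝕜] H)
    (hP : ∀ x y : H,
      Tendsto (fun n : ℕ => (inner 𝕜 ((T ^ n) x) y : 𝕜)) atTop (nhds (inner 𝕜 (P x) y)))
    (x : H) :
    Tendsto (fun n : ℕ => ‖(n : 𝕜)⁻¹ • ∑ k ∈ Icc 1 n, a k • (T ^ k) x - c • P x‖)
      atTop (nhds 0) :=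
  tendsto_iff_norm_sub_tendsto_zero.1 (stmt6_general ha_bdd hc hT (hP x))
end

section
/- Let (a_k)_{k≥1} be a sequence of scalars satisfying sup_n (1/n)∑_{k=1}^n |a_k| < ∞. Then |a_n| = o(n) if and only if (1/n²)∑_{k=1}^n |a_k|² → 0 as n → ∞. -/
open Filter Finset

/-!
The forward implication interpolates between the running maximum `Mₙ = max_{k ≤ n} |a_k|` and the
partial sums: `∑_{k ≤ n} |a_k|² ≤ Mₙ ∑_{k ≤ n} |a_k|`, where the sum on the right is `O(n)` and
`Mₙ = o(n)` because each fixed initial segment is negligible compared with `n → ∞`. Conversely,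
`|a_n|²` is one of the terms of the sum of squares. The same argument works for every exponent
`p > 1` and every monotone normalising sequence tending to infinity.
-/

open Asymptotics

theorem isLittleO_partialSups {f g : ℕ → ℝ} (hfg : f =o[atTop] g) (hg_mono : Monotone g)
    (hg : Tendsto g atTop atTop) : partialSups f =o[atTop] g := by
  refine IsLittleO.of_bound fun ε hε ↦ ?_
  have hf_abs_le : ∀ᶠ k in atTop, |f k| ≤ ε * g k := by
    filter_upwards [hfg.bound hε, hg.eventually_ge_atTop 0] with k hk hgk
    rwa [Real.norm_eq_abs, Real.norm_of_nonneg hgk] at hk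
  obtain ⟨N, hN⟩ := eventually_atTop.1 hf_abs_le
  have hinitial : ∀ᶠ n in atTop, partialSups f N ≤ ε * g n :=
    (hg.const_mul_atTop hε).eventually_ge_atTop _
  filter_upwards [hinitial, hf_abs_le, hg.eventually_ge_atTop 0] with n hn hfn hgn
  rw [Real.norm_eq_abs, Real.norm_of_nonneg hgn, abs_le]
  refine ⟨(abs_le.1 hfn).1.trans (le_partialSups f n), partialSups_le f n _ fun k hkn ↦ ?_⟩
  rcases le_total k N with hkN | hNk
  · exact (le_partialSups_of_le f hkN).trans hn
  · calc f k ≤ ε * g k := (le_abs_self _).trans (hN k hNk)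
      _ ≤ ε * g n := mul_le_mul_of_nonneg_left (hg_mono hkn) hε.le

theorem sum_rpow_le_rpow_sub_one_mul_sum {ι : Type*} {s : Finset ι} {f : ι → ℝ} {M p : ℝ}
    (hf : ∀ i ∈ s, 0 ≤ f i) (hfM : ∀ i ∈ s, f i ≤ M) (hp : 1 ≤ p) :
    ∑ i ∈ s, f i ^ p ≤ M ^ (p - 1) * ∑ i ∈ s, f i := by
  rw [mul_sum]
  refine sum_le_sum fun i hi ↦ ?_
  calc f i ^ p = f i ^ (p - 1) * f i := by
        rw [← Real.rpow_add_one' (hf i hi) (by linarith), sub_add_cancel]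
    _ ≤ M ^ (p - 1) * f i :=
        mul_le_mul_of_nonneg_right
          (Real.rpow_le_rpow (hf i hi) (hfM i hi) (sub_nonneg.2 hp)) (hf i hi)

section SumRpow

variable {α ι : Type*} {l : Filter α} {g : α → ℝ} {p : ℝ}

theorem isLittleO_sum_rpow {s : α → Finset ι} {f : ι → ℝ} {M : α → ℝ} (hf : 0 ≤ f)
    (hfM : ∀ᶠ x in l, ∀ i ∈ s x, f i ≤ M x) (hM : M =o[l] g)
    (hsum : (fun x ↦ ∑ i ∈ s x, f i) =O[l] g) (hg : 0 ≤ᶠ[l] g) (hp : 1 < p) :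
    (fun x ↦ ∑ i ∈ s x, f i ^ p) =o[l] fun x ↦ g x ^ p := by
  have hle : (fun x ↦ ∑ i ∈ s x, f i ^ p) =O[l] fun x ↦ M x ^ (p - 1) * ∑ i ∈ s x, f i := by
    refine IsBigO.of_norm_eventuallyLE ?_
    filter_upwards [hfM] with x hx
    rw [Real.norm_of_nonneg (sum_nonneg fun i _ ↦ Real.rpow_nonneg (hf i) p)]
    exact sum_rpow_le_rpow_sub_one_mul_sum (fun i _ ↦ hf i) hx hp.le
  have hmul : (fun x ↦ M x ^ (p - 1) * ∑ i ∈ s x, f i) =o[l] fun x ↦ g x ^ (p - 1) * g x :=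
    (hM.rpow (sub_pos.2 hp) hg).mul_isBigO hsum
  refine (hle.trans_isLittleO hmul).congr' .rfl ?_
  filter_upwards [hg] with x hx
  rw [← Real.rpow_add_one' hx (by linarith), sub_add_cancel]

theorem isLittleO_of_isLittleO_sum_rpow {s : α → Finset α} {f : α → ℝ} (hf : 0 ≤ f)
    (hs : ∀ᶠ x in l, x ∈ s x) (hsum : (fun x ↦ ∑ y ∈ s x, f y ^ p) =o[l] fun x ↦ g x ^ p)
    (hg : 0 ≤ᶠ[l] g) (hp : 0 < p) : f =o[l] g := by
  have hterm : (fun x ↦ f x ^ p) =O[l] fun x ↦ ∑ y ∈ s x, f y ^ p := by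
    refine IsBigO.of_norm_eventuallyLE ?_
    filter_upwards [hs] with x hx
    rw [Real.norm_of_nonneg (Real.rpow_nonneg (hf x) p)]
    exact single_le_sum (f := fun y ↦ f y ^ p) (fun y _ ↦ Real.rpow_nonneg (hf y) p) hx
  have hg_rpow : 0 ≤ᶠ[l] fun x ↦ g x ^ p := hg.mono fun _ hx ↦ Real.rpow_nonneg hx p
  refine ((hterm.trans_isLittleO hsum).rpow (inv_pos.2 hp) hg_rpow).congr' ?_ ?_
  · exact .of_forall fun x ↦ Real.rpow_rpow_inv (hf x) hp.ne'
  · exact hg.mono fun x hx ↦ Real.rpow_rpow_inv hx hp.ne'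

end SumRpow

theorem stmt7_general {E : Type*} [SeminormedAddGroup E] (a : ℕ → E) {g : ℕ → ℝ} {p : ℝ}
    (hg_mono : Monotone g) (hg : Tendsto g atTop atTop) (hp : 1 < p)
    (ha_bdd : IsBoundedUnder (· ≤ ·) atTop fun n ↦ (g n)⁻¹ * ∑ k ∈ Icc 1 n, ‖a k‖) :
    Tendsto (fun n ↦ ‖a n‖ / g n) atTop (nhds 0) ↔
    Tendsto (fun n ↦ (g n ^ p)⁻¹ * ∑ k ∈ Icc 1 n, ‖a k‖ ^ p) atTop (nhds 0) := by
  have hg_pos : ∀ᶠ n in atTop, 0 < g n := hg.eventually_gt_atTop 0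
  have hg_nonneg : 0 ≤ᶠ[atTop] g := hg_pos.mono fun _ h ↦ h.le
  have hsum : (fun n ↦ ∑ k ∈ Icc 1 n, ‖a k‖) =O[atTop] g := by
    obtain ⟨C, hC⟩ := ha_bdd
    refine IsBigO.of_bound C ?_
    filter_upwards [eventually_map.1 hC, hg_pos] with n hn hgn
    rw [Real.norm_of_nonneg (by positivity), Real.norm_of_nonneg hgn.le, mul_comm C]
    exact (inv_mul_le_iff₀ hgn).1 hn
  simp only [← div_eq_inv_mul]
  rw [← isLittleO_iff_tendsto' (hg_pos.mono fun _ h h0 ↦ absurd h0 h.ne'),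
    ← isLittleO_iff_tendsto' (hg_pos.mono fun _ h h0 ↦ absurd h0 (Real.rpow_pos_of_pos h p).ne')]
  have ha_nonneg : 0 ≤ fun k ↦ ‖a k‖ := fun k ↦ norm_nonneg (a k)
  constructor
  · intro ha
    have hmax : ∀ n, ∀ k ∈ Icc 1 n, ‖a k‖ ≤ partialSups (fun k ↦ ‖a k‖) n :=
      fun n k hk ↦ le_partialSups_of_le (fun k ↦ ‖a k‖) (mem_Icc.1 hk).2
    exact isLittleO_sum_rpow ha_nonneg (.of_forall hmax)
      (isLittleO_partialSups ha hg_mono hg) hsum hg_nonneg hp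
  · intro ha
    have hmem : ∀ᶠ n in atTop, n ∈ Icc 1 n :=
      (eventually_ge_atTop 1).mono fun n hn ↦ right_mem_Icc.2 hn
    exact isLittleO_of_isLittleO_sum_rpow ha_nonneg hmem ha hg_nonneg (zero_lt_one.trans hp)

/-- Let `(a_k)` be a sequence of scalars with
`sup_n (1/n) ∑_{k=1}^n |a_k| < ∞`. Then `|a_n| = o(n)` if and only if
`(1/n²) ∑_{k=1}^n |a_k|² → 0`. -/
theorem stmt7 {𝕜 : Type*} [RCLike 𝕜] (a : ℕ → 𝕜)
    (ha_bdd : ∃ C : ℝ, ∀ n : ℕ, (n : ℝ)⁻¹ * ∑ k ∈ Icc 1 n, ‖a k‖ ≤ C) :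
    Tendsto (fun n : ℕ => ‖a n‖ / (n : ℝ)) atTop (nhds 0) ↔
    Tendsto (fun n : ℕ => ((n : ℝ) ^ 2)⁻¹ * ∑ k ∈ Icc 1 n, ‖a k‖ ^ 2) atTop (nhds 0) := by
  simpa only [Real.rpow_two] using
    stmt7_general a Nat.mono_cast tendsto_natCast_atTop_atTop one_lt_two (isBoundedUnder_of ha_bdd)
end
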